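/- For every real b > 0, R(e^{−2π/b})⁵ = (−α)⁵ · (1 − β⁵·R(e^{−2πb/5})⁵) / (1 − α⁵·R(e^{−2πb/5})⁵). -/

import Mathlib

/-!
The proof rests on Ramanujan's identity
`1/R⁵ - 11 - R⁵ = (q; q)_∞⁶ / (q (q⁵; q⁵)_∞⁶)`, with `R = R(q)`.
Its right-hand side is the eta quotient `(η(τ)/η(5τ))⁶` with `q = e^{2πiτ}`, and the inversion formula
for `η` (in Mathlib) shows that its values at `e^{-2πb/5}` and `e^{-2π/b}` multiply to `125`
(`hQuot_mul_hQuot`). Hence the fifth powers `x`, `y` of the two continued fractions satisfy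
`(1 - 11x - x²)(1 - 11y - y²) = 125xy`. This factors over `ℚ(√5)` into two relations that are linear
in `x` and in `y`; positivity of `x` and `y` together with `xy < 1` excludes one of them, and the
other is the claim (`mobius_of_product`).

For Ramanujan's identity, the Jacobi triple product (`jtp`, obtained from the `q`-binomial theorem by
dominated convergence) expresses the theta series `A(q) = f(-q, -q⁴)` and `B(q) = f(-q², -q³)` as
products, so that `R⁵ = q A⁵ / B⁵` and `A(q) B(q) = (q; q)_∞ (q⁵; q⁵)_∞`. As a double series,
`A(q) B(q)` is a sum over `ℤ[i]`; splitting it into cosets of the ideal generated by `2 + i` gives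
`A(q) B(q) = B(q⁵)² - q A(q⁵) B(q⁵) - q² A(q⁵)²` (`thetaA_mul_thetaB_eq`). Replacing `q` by `ζ q` for
the fifth roots of unity `ζ` and multiplying the five resulting equations turns the right-hand side
into `B¹⁰ - 11 q⁵ A⁵ B⁵ - q¹⁰ A¹⁰` at `q⁵` and the left-hand side into a product of Euler products
(`ramanujan_identity`).
-/

open Real

/-- The Rogers–Ramanujan continued fraction value, via its product expansion,
for real `q` with `0 < q < 1`. -/
noncomputable def rrcf (q : ℝ) : ℝ :=
  q ^ ((1 : ℝ)/5) *
    ∏' n : ℕ,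
      (1 - q ^ (5*(n+1) - 1)) * (1 - q ^ (5*(n+1) - 4)) /
      ((1 - q ^ (5*(n+1) - 2)) * (1 - q ^ (5*(n+1) - 3)))

/-- Jacobi's second theta function `θ₂(z; q)` for real `z` and `0 < q < 1`. -/
noncomputable def theta2 (z q : ℝ) : ℝ :=
  2 * ∑' n : ℕ, q ^ (((n : ℝ) + 1/2)^2) * Real.cos ((2*(n : ℝ) + 1) * z)

/-- Ramanujan's function `f(-q) = ∑_{n ∈ ℤ} (-1)^n q^{n(3n-1)/2}`. -/
noncomputable def fneg (q : ℝ) : ℝ :=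
  ∑' n : ℤ, (-1 : ℝ) ^ n * q ^ (n * (3*n - 1) / 2)

/-- The golden-ratio conjugate `α = (1 - √5)/2`. -/
noncomputable def alphaRR : ℝ := (1 - Real.sqrt 5) / 2

/-- The golden ratio `β = (1 + √5)/2`. -/
noncomputable def betaRR : ℝ := (1 + Real.sqrt 5) / 2

open Filter Topology

/-! ### The Jacobi triple product -/

/-- The `q`-Pochhammer symbol `(Q; Q)_N = ∏_{k=1}^{N} (1 - Q^k)`. -/
noncomputable def poch (Q : ℂ) (N : ℕ) : ℂ := ∏ k ∈ Finset.range N, (1 - Q ^ (k + 1))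

/-- The Euler product `(Q; Q)_∞ = ∏_{k ≥ 1} (1 - Q^k)`. -/
noncomputable def euler (Q : ℂ) : ℂ := ∏' k : ℕ, (1 - Q ^ (k + 1))

/-- The Gaussian binomial coefficient, defined by its Pascal recurrence; it vanishes for `k > M`,
so the truncated difference `M - k` only matters when `k ≤ M`. -/
noncomputable def gauss (Q : ℂ) : ℕ → ℕ → ℂ
  | _, 0 => 1
  | 0, _ + 1 => 0
  | M + 1, k + 1 => gauss Q M (k + 1) + Q ^ (M - k) * gauss Q M k

lemma gauss_zero_right (Q : ℂ) (M : ℕ) : gauss Q M 0 = 1 := by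
  cases M <;> rfl

lemma gauss_eq_zero (Q : ℂ) (M : ℕ) : ∀ k, M < k → gauss Q M k = 0 := by
  induction M with
  | zero => intro k hk; obtain ⟨k, rfl⟩ := Nat.exists_eq_succ_of_ne_zero hk.ne'; rfl
  | succ M ih =>
    intro k hk
    obtain ⟨k, rfl⟩ := Nat.exists_eq_succ_of_ne_zero (by omega : k ≠ 0)
    simp only [gauss]
    rw [ih _ (by omega), ih _ (by omega)]; simp

/-- The `q`-binomial theorem. -/
lemma qbinomial (Q x : ℂ) (M : ℕ) :
    ∏ j ∈ Finset.range M, (1 + x * Q ^ j) =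
      ∑ k ∈ Finset.range (M + 1), gauss Q M k * Q ^ (k.choose 2) * x ^ k := by
  induction M with
  | zero => simp [gauss]
  | succ M ih =>
    rw [Finset.prod_range_succ, ih, Finset.sum_range_succ' _ (M + 1)]
    have h1 : ∀ k ∈ Finset.range (M + 1),
        gauss Q (M + 1) (k + 1) * Q ^ ((k + 1).choose 2) * x ^ (k + 1) =
          gauss Q M (k + 1) * Q ^ ((k + 1).choose 2) * x ^ (k + 1) +
          (gauss Q M k * Q ^ (k.choose 2) * x ^ k) * (x * Q ^ M) := by
      intro k hk
      have hk' : k ≤ M := by simpa [Nat.lt_succ_iff] using hk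
      have h2 : (k + 1).choose 2 = k + k.choose 2 := by
        rw [Nat.choose_succ_succ' k 1, Nat.choose_one_right]
      have h3 : Q ^ M = Q ^ (M - k) * Q ^ k := by rw [← pow_add]; congr 1; omega
      simp only [gauss, h2, h3]
      ring
    rw [Finset.sum_congr rfl h1, Finset.sum_add_distrib, ← Finset.sum_mul]
    have h4 := Finset.sum_range_succ' (fun k => gauss Q M k * Q ^ (k.choose 2) * x ^ k) (M + 1)
    rw [Finset.sum_range_succ, gauss_eq_zero Q M (M + 1) (by omega)] at h4
    simp only [gauss_zero_right] at h4 ⊢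
    linear_combination h4

lemma gauss_mul_poch (Q : ℂ) (n : ℕ) : ∀ k l, k + l = n →
    gauss Q n k * (poch Q k * poch Q l) = poch Q n := by
  induction n with
  | zero =>
    intro k l h
    obtain ⟨rfl, rfl⟩ : k = 0 ∧ l = 0 := by omega
    simp [gauss, poch]
  | succ n ih =>
    intro k l h
    rcases k with _ | k
    · obtain rfl : l = n + 1 := by omega
      simp [gauss, poch]
    have hp : ∀ m, poch Q (m + 1) = poch Q m * (1 - Q ^ (m + 1)) := fun m => by
      simp [poch, Finset.prod_range_succ]
    have e1 := ih k l (by omega)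
    have hnk : n - k = l := by omega
    have hQ : Q ^ (n + 1) = Q ^ (k + 1) * Q ^ l := by rw [← pow_add]; congr 1; omega
    simp only [gauss, hnk]
    rcases l with _ | l
    · rw [gauss_eq_zero Q n (k + 1) (by omega), hp, hp n, hQ]
      linear_combination (1 - Q ^ (k + 1)) * e1
    · have e2 := ih (k + 1) l (by omega)
      rw [hp n, hQ]
      rw [hp k] at e2 ⊢
      rw [hp l] at e1 ⊢
      linear_combination (1 - Q ^ (l + 1)) * e2 + Q ^ (l + 1) * (1 - Q ^ (k + 1)) * e1

lemma one_sub_pow_ne_zero {Q : ℂ} (hQ : ‖Q‖ < 1) (k : ℕ) : 1 - Q ^ (k + 1) ≠ 0 := by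
  intro h
  have h1 : ‖Q ^ (k + 1)‖ = 1 := by rw [← sub_eq_zero.1 h, norm_one]
  rw [norm_pow] at h1
  exact (pow_lt_one₀ (norm_nonneg _) hQ k.succ_ne_zero).ne h1

lemma poch_ne_zero {Q : ℂ} (hQ : ‖Q‖ < 1) (N : ℕ) : poch Q N ≠ 0 :=
  Finset.prod_ne_zero_iff.2 fun k _ => one_sub_pow_ne_zero hQ k

lemma tendsto_poch {Q : ℂ} (hQ : ‖Q‖ < 1) : Tendsto (poch Q) atTop (𝓝 (euler Q)) :=
  (ModularForm.multipliable_one_sub_pow hQ).hasProd.tendsto_prod_nat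

lemma euler_ne_zero {Q : ℂ} (hQ : ‖Q‖ < 1) : euler Q ≠ 0 := by
  have := tprod_one_add_ne_zero_of_summable (f := fun k : ℕ => -Q ^ (k + 1))
    (fun k => by simpa [← sub_eq_add_neg] using one_sub_pow_ne_zero hQ k)
    (by simpa using (summable_nat_add_iff 1).mpr
          (summable_geometric_of_lt_one (norm_nonneg _) hQ))
  simpa [euler, sub_eq_add_neg] using this

/-- The triangular number `n (n + 1) / 2`; the division is exact. -/
def tri (n : ℤ) : ℤ := n * (n + 1) / 2

lemma two_mul_tri (n : ℤ) : 2 * tri n = n * (n + 1) :=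
  Int.mul_ediv_cancel' (Int.even_mul_succ_self n).two_dvd

lemma two_mul_choose (k : ℕ) : 2 * ((k.choose 2 : ℕ) : ℤ) = k * (k - 1) := by
  rcases k with _ | k
  · simp
  have h : (k + 1).choose 2 * 2 = (k + 1) * k := by
    have := Nat.triangle_succ k
    have h2 := Nat.choose_two_right (k + 1)
    have h3 : 2 ∣ (k + 1) * k := by simpa [mul_comm] using (Nat.even_mul_succ_self k).two_dvd
    rw [h2]; simpa using Nat.div_mul_cancel h3
  push_cast
  have : (((k + 1).choose 2 * 2 : ℕ) : ℤ) = (((k + 1) * k : ℕ) : ℤ) := by rw [h]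
  push_cast at this
  linarith

/-- The coefficient of the `n`-th term in the finite form of the triple product. -/
noncomputable def jtpCoeff (Q : ℂ) (N : ℕ) (n : ℤ) : ℂ :=
  if -(N : ℤ) ≤ n then gauss Q (N + N) (N + n).toNat else 0

/-- The `n`-th term `(-1)^n Q^{n(n+1)/2} z^n` of the theta series. -/
noncomputable def thetaTerm (Q z : ℂ) (n : ℤ) : ℂ := (-1) ^ n * Q ^ tri n * z ^ n

/-- The finite form of the Jacobi triple product: the `q`-binomial theorem for `2 N` factors,
recentred at the middle term. -/
lemma finite_jtp {Q z : ℂ} (hQ : Q ≠ 0) (hz : z ≠ 0) (N : ℕ) :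
    ∏ j ∈ Finset.range N, ((1 - z * Q ^ (j + 1)) * (1 - z⁻¹ * Q ^ j)) =
      ∑' n : ℤ, jtpCoeff Q N n * thetaTerm Q z n := by
  have h1 := qbinomial Q (-z * Q ^ (1 - (N : ℤ))) (N + N)
  rw [Finset.prod_range_add] at h1
  have h2 : ∏ j ∈ Finset.range N, (1 + -z * Q ^ (1 - (N : ℤ)) * Q ^ (N + j)) =
      ∏ j ∈ Finset.range N, (1 - z * Q ^ (j + 1)) := by
    refine Finset.prod_congr rfl fun j _ => ?_
    have : Q ^ (1 - (N : ℤ)) * Q ^ (N + j) = Q ^ (j + 1) := by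
      rw [← zpow_natCast, ← zpow_natCast, ← zpow_add₀ hQ]; congr 1; push_cast; ring
    rw [mul_assoc, this]; ring
  have h3 : ∏ j ∈ Finset.range N, (1 + -z * Q ^ (1 - (N : ℤ)) * Q ^ j) =
      ((-1) ^ (N : ℤ) * z ^ (N : ℤ) * Q ^ (-((N.choose 2 : ℕ) : ℤ))) *
        ∏ j ∈ Finset.range N, (1 - z⁻¹ * Q ^ j) := by
    rw [← Finset.prod_range_reflect]
    have hterm : ∀ j ∈ Finset.range N, 1 + -z * Q ^ (1 - (N : ℤ)) * Q ^ (N - 1 - j) =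
        (-z * Q ^ (-(j : ℤ))) * (1 - z⁻¹ * Q ^ j) := by
      intro j hj
      have hj' := Finset.mem_range.1 hj
      have e : Q ^ (1 - (N : ℤ)) * Q ^ (N - 1 - j) = Q ^ (-(j : ℤ)) := by
        rw [← zpow_natCast, ← zpow_add₀ hQ]; congr 1; omega
      have e2 : Q ^ (-(j : ℤ)) * Q ^ j = 1 := by
        rw [← zpow_natCast, ← zpow_add₀ hQ]; simp
      have e3 : z * z⁻¹ = 1 := mul_inv_cancel₀ hz
      rw [mul_assoc, e]
      linear_combination -e2 - Q ^ (-(j : ℤ)) * Q ^ j * e3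
    rw [Finset.prod_congr rfl hterm, Finset.prod_mul_distrib]
    congr 1
    clear h1 h2 hterm
    induction N with
    | zero => simp
    | succ N ih =>
      rw [Finset.prod_range_succ, ih, Nat.choose_succ_succ' N 1, Nat.choose_one_right]
      push_cast
      rw [neg_add, zpow_add₀ hQ, zpow_add_one₀ hz, zpow_add_one₀ (by norm_num)]
      ring
  rw [h2, h3] at h1
  set K : ℂ := (-1) ^ (N : ℤ) * z ^ (N : ℤ) * Q ^ (-((N.choose 2 : ℕ) : ℤ)) with hK
  have hK0 : K ≠ 0 := by
    refine mul_ne_zero (mul_ne_zero ?_ ?_) ?_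
    · exact zpow_ne_zero _ (by norm_num)
    · exact zpow_ne_zero _ hz
    · exact zpow_ne_zero _ hQ
  rw [Finset.prod_mul_distrib]
  apply mul_left_cancel₀ hK0
  have hL : K * ((∏ j ∈ Finset.range N, (1 - z * Q ^ (j + 1))) *
      ∏ j ∈ Finset.range N, (1 - z⁻¹ * Q ^ j)) = _ := Eq.trans (by ring) h1
  rw [hL, tsum_eq_sum (s := Finset.Icc (-(N : ℤ)) N), Finset.mul_sum]
  · refine Finset.sum_bij' (fun k _ => (k : ℤ) - N) (fun n _ => (N + n).toNat) ?_ ?_ ?_ ?_ ?_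
    · intro k hk; have := Finset.mem_range.1 hk; rw [Finset.mem_Icc]; omega
    · intro n hn; have := Finset.mem_Icc.1 hn; rw [Finset.mem_range]; omega
    · intro k hk; simp
    · intro n hn; have := Finset.mem_Icc.1 hn; omega
    · intro k hk
      have hk' := Finset.mem_range.1 hk
      have hc : jtpCoeff Q N ((k : ℤ) - N) = gauss Q (N + N) k := by
        rw [jtpCoeff, if_pos (by omega)]; congr 1; omega
      rw [hc, thetaTerm, hK, mul_pow, neg_pow, ← zpow_natCast (Q ^ _), ← zpow_mul]
      have e1 : z ^ (N : ℤ) * z ^ ((k : ℤ) - N) = z ^ k := by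
        rw [← zpow_add₀ hz, ← zpow_natCast]; congr 1; ring
      have e2 : ((-1 : ℂ)) ^ (N : ℤ) * (-1) ^ ((k : ℤ) - N) = (-1) ^ k := by
        rw [← zpow_add₀ (by norm_num), ← zpow_natCast]; congr 1; ring
      have e3 : Q ^ (-((N.choose 2 : ℕ) : ℤ)) * Q ^ tri ((k : ℤ) - N) =
          Q ^ (k.choose 2) * Q ^ ((1 - (N : ℤ)) * (k : ℤ)) := by
        rw [← zpow_natCast, ← zpow_add₀ hQ, ← zpow_add₀ hQ]
        congr 1
        have a := two_mul_choose N
        have b := two_mul_choose k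
        have c := two_mul_tri ((k : ℤ) - N)
        have : 2 * (-((N.choose 2 : ℕ) : ℤ) + tri ((k : ℤ) - N)) =
            2 * (((k.choose 2 : ℕ) : ℤ) + (1 - (N : ℤ)) * (k : ℤ)) := by
          linear_combination c - a - b
        omega
      rw [← e1, ← e2]
      linear_combination (-gauss Q (N + N) k * z ^ (N : ℤ) * z ^ ((k : ℤ) - N) *
        ((-1 : ℂ)) ^ (N : ℤ) * (-1) ^ ((k : ℤ) - N)) * e3
  · intro n hn
    rw [Finset.mem_Icc] at hn
    by_cases h : -(N : ℤ) ≤ n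
    · rw [jtpCoeff, if_pos h, gauss_eq_zero _ _ _ (by omega), zero_mul]
    · rw [jtpCoeff, if_neg h, zero_mul]

lemma jtpCoeff_eq {Q : ℂ} (hQ : ‖Q‖ < 1) {N : ℕ} {n : ℤ} (h1 : -(N : ℤ) ≤ n) (h2 : n ≤ N) :
    jtpCoeff Q N n = poch Q (N + N) * (poch Q (N + n).toNat)⁻¹ * (poch Q (N - n).toNat)⁻¹ := by
  have h := gauss_mul_poch Q (N + N) (N + n).toNat (N - n).toNat (by omega)
  have a := poch_ne_zero hQ (N + n).toNat
  have b := poch_ne_zero hQ (N - n).toNat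
  rw [jtpCoeff, if_pos h1, ← h]
  field_simp

/-- The Jacobi triple product identity, as a limit of partial products. It follows from the finite
form by dominated convergence, since the coefficients are bounded and tend to `1 / (Q; Q)_∞`. -/
lemma jtp {Q z : ℂ} (hQ0 : Q ≠ 0) (hQ : ‖Q‖ < 1) (hz : z ≠ 0)
    (hs : Summable fun n => ‖thetaTerm Q z n‖) :
    Tendsto (fun N => poch Q N *
      ∏ j ∈ Finset.range N, ((1 - z * Q ^ (j + 1)) * (1 - z⁻¹ * Q ^ j))) atTop
      (𝓝 (∑' n : ℤ, thetaTerm Q z n)) := by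
  have hP := tendsto_poch hQ
  have hP0 := euler_ne_zero hQ
  have hI := hP.inv₀ hP0
  obtain ⟨C, hC⟩ := (Metric.isBounded_range_of_tendsto _ hP).exists_norm_le
  obtain ⟨D, hD⟩ := (Metric.isBounded_range_of_tendsto _ hI).exists_norm_le
  have hC' : ∀ n, ‖poch Q n‖ ≤ C := fun n => hC _ ⟨n, rfl⟩
  have hD' : ∀ n, ‖(poch Q n)⁻¹‖ ≤ D := fun n => hD _ ⟨n, rfl⟩
  have hC0 : 0 ≤ C := (norm_nonneg _).trans (hC' 0)
  have hD0 : 0 ≤ D := (norm_nonneg _).trans (hD' 0)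
  have hlim : ∀ n : ℤ, Tendsto (fun N : ℕ => jtpCoeff Q N n) atTop (𝓝 (euler Q)⁻¹) := by
    intro n
    have t1 : Tendsto (fun N : ℕ => N + N) atTop atTop :=
      tendsto_atTop_mono (fun N => Nat.le_add_left N N) tendsto_id
    have t2 : Tendsto (fun N : ℕ => ((N : ℤ) + n).toNat) atTop atTop := by
      refine tendsto_atTop.2 fun b => ?_
      filter_upwards [eventually_ge_atTop (b + n.natAbs)] with N hN
      omega
    have t3 : Tendsto (fun N : ℕ => ((N : ℤ) - n).toNat) atTop atTop := by
      refine tendsto_atTop.2 fun b => ?_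
      filter_upwards [eventually_ge_atTop (b + n.natAbs)] with N hN
      omega
    have := ((hP.comp t1).mul (hI.comp t2)).mul (hI.comp t3)
    rw [mul_inv_cancel₀ hP0, one_mul] at this
    refine this.congr' ?_
    filter_upwards [eventually_ge_atTop n.natAbs] with N hN
    exact (jtpCoeff_eq hQ (by omega) (by omega)).symm
  have hbound : ∀ N : ℕ, ∀ n : ℤ, ‖jtpCoeff Q N n‖ ≤ C * D * D := by
    intro N n
    by_cases h1 : -(N : ℤ) ≤ n
    · by_cases h2 : n ≤ N
      · rw [jtpCoeff_eq hQ h1 h2, norm_mul, norm_mul]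
        gcongr
        exacts [hC' _, hD' _, hD' _]
      · rw [jtpCoeff, if_pos h1, gauss_eq_zero _ _ _ (by omega), norm_zero]; positivity
    · rw [jtpCoeff, if_neg h1, norm_zero]; positivity
  have key := tendsto_tsum_of_dominated_convergence
    (f := fun N n => jtpCoeff Q N n * thetaTerm Q z n)
    (g := fun n => (euler Q)⁻¹ * thetaTerm Q z n)
    (bound := fun n => C * D * D * ‖thetaTerm Q z n‖) (𝓕 := atTop)
    (hs.mul_left _) (fun n => (hlim n).mul_const _)
    (Eventually.of_forall fun N n => by
      rw [norm_mul]; exact mul_le_mul_of_nonneg_right (hbound N n) (norm_nonneg _))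
  rw [tsum_mul_left] at key
  have := hP.mul key
  rw [mul_inv_cancel_left₀ hP0] at this
  exact this.congr fun N => by rw [finite_jtp hQ0 hz]

/-! ### The two theta series and their quadratic relation -/

/-- Comparison with a geometric series. -/
lemma summable_zpow_of_le {r : ℝ} (h0 : 0 < r) (h1 : r < 1) (e : ℤ → ℤ)
    (he : ∀ n, |n| - 1 ≤ e n) : Summable fun n => r ^ e n := by
  have hg : Summable fun n : ℤ => r⁻¹ * r ^ n.natAbs := by
    apply Summable.mul_left
    apply Summable.of_nat_of_neg
    · simpa using summable_geometric_of_lt_one h0.le h1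
    · simpa using summable_geometric_of_lt_one h0.le h1
  refine hg.of_nonneg_of_le (fun n => (zpow_pos h0 _).le) fun n => ?_
  have : r⁻¹ * r ^ n.natAbs = r ^ (|n| - 1) := by
    rw [zpow_sub_one₀ h0.ne', mul_comm, ← zpow_natCast, Int.natCast_natAbs]
  rw [this]
  exact zpow_le_zpow_right_of_le_one₀ h0 h1.le (he n)

/-- The theta series `f(-q, -q⁴) = ∑ (-1)^n q^{n(5n+3)/2}`. -/
noncomputable def thetaA (q : ℂ) : ℂ := ∑' n : ℤ, thetaTerm (q ^ 5) q⁻¹ n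

/-- The theta series `f(-q², -q³) = ∑ (-1)^n q^{n(5n+1)/2}`. -/
noncomputable def thetaB (q : ℂ) : ℂ := ∑' n : ℤ, thetaTerm (q ^ 5) (q ^ 2)⁻¹ n

lemma thetaTerm_A {q : ℂ} (hq : q ≠ 0) (n : ℤ) :
    thetaTerm (q ^ 5) q⁻¹ n = (-1) ^ n * q ^ (5 * tri n - n) := by
  rw [thetaTerm, ← zpow_natCast, ← zpow_mul, inv_zpow', mul_assoc, ← zpow_add₀ hq]
  rfl

lemma thetaTerm_B {q : ℂ} (hq : q ≠ 0) (n : ℤ) :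
    thetaTerm (q ^ 5) (q ^ 2)⁻¹ n = (-1) ^ n * q ^ (5 * tri n - 2 * n) := by
  rw [thetaTerm, ← zpow_natCast, ← zpow_mul, inv_zpow', ← zpow_natCast q 2, ← zpow_mul, mul_assoc,
    ← zpow_add₀ hq]
  congr 2
  push_cast; ring

lemma norm_sign_mul_zpow (q : ℂ) (n e : ℤ) : ‖(-1) ^ n * q ^ e‖ = ‖q‖ ^ e := by
  simp [norm_zpow]

lemma summable_A {q : ℂ} (hq : q ≠ 0) (h1 : ‖q‖ < 1) :
    Summable fun n => ‖thetaTerm (q ^ 5) q⁻¹ n‖ := by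
  simp_rw [thetaTerm_A hq, norm_sign_mul_zpow]
  refine summable_zpow_of_le (norm_pos_iff.2 hq) h1 _ fun n => ?_
  have := two_mul_tri n
  rcases abs_cases n with ⟨h, _⟩ | ⟨h, _⟩ <;> rw [h] <;> nlinarith [sq_nonneg (n + 1), sq_nonneg n]

lemma summable_B {q : ℂ} (hq : q ≠ 0) (h1 : ‖q‖ < 1) :
    Summable fun n => ‖thetaTerm (q ^ 5) (q ^ 2)⁻¹ n‖ := by
  simp_rw [thetaTerm_B hq, norm_sign_mul_zpow]
  refine summable_zpow_of_le (norm_pos_iff.2 hq) h1 _ fun n => ?_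
  have := two_mul_tri n
  rcases abs_cases n with ⟨h, _⟩ | ⟨h, _⟩ <;> rw [h] <;> nlinarith [sq_nonneg (n + 1), sq_nonneg n]

/-- The term `(-1)^n q^{n(n+1)/2}`, which is odd under `n ↦ -1 - n`. -/
noncomputable def gTerm (q : ℂ) (n : ℤ) : ℂ := (-1) ^ n * q ^ tri n

lemma summable_gTerm {q : ℂ} (hq : q ≠ 0) (h1 : ‖q‖ < 1) : Summable fun n => ‖gTerm q n‖ := by
  simp_rw [gTerm, norm_sign_mul_zpow]
  refine summable_zpow_of_le (norm_pos_iff.2 hq) h1 _ fun n => ?_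
  have := two_mul_tri n
  rcases abs_cases n with ⟨h, _⟩ | ⟨h, h'⟩ <;> rw [h]
  · nlinarith [sq_nonneg (n - 1)]
  · have : 0 ≤ (n + 1) * (n + 2) := by
      rcases (by omega : n = -1 ∨ n + 2 ≤ 0) with rfl | h
      · norm_num
      · exact mul_nonneg_of_nonpos_of_nonpos (by omega) h
    nlinarith

lemma neg_one_zpow_congr {a b : ℤ} (h : Even (a - b)) : ((-1 : ℂ)) ^ a = (-1) ^ b := by
  have : a = b + (a - b) := by ring
  rw [this, zpow_add₀ (by norm_num), h.neg_one_zpow, mul_one]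

lemma gTerm_reflect (q : ℂ) (n : ℤ) : gTerm q (-1 - n) = -gTerm q n := by
  have h : tri (-1 - n) = tri n := by
    have a := two_mul_tri n
    have b := two_mul_tri (-1 - n)
    have : 2 * tri (-1 - n) = 2 * tri n := by linear_combination b - a
    omega
  have hs : ((-1 : ℂ)) ^ (-1 - n) = -(-1) ^ n := by
    rw [neg_one_zpow_congr (b := n + 1) ⟨-1 - n, by ring⟩, zpow_add_one₀ (by norm_num)]; ring
  rw [gTerm, gTerm, h, hs]; ring

/-- The sum of `gTerm` over a residue class modulo `5`. -/
noncomputable def gClass (q : ℂ) (k : ℤ) : ℂ := ∑' s : ℤ, gTerm q (5 * s + k)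

lemma gClass_add_five (q : ℂ) (k : ℤ) : gClass q (k + 5) = gClass q k := by
  rw [gClass, gClass, ← (Equiv.addRight (1 : ℤ)).tsum_eq (fun s => gTerm q (5 * s + k))]
  refine tsum_congr fun s => ?_
  congr 1
  simp only [Equiv.coe_addRight]
  ring

lemma gClass_reflect (q : ℂ) (k : ℤ) : gClass q (-1 - k) = -gClass q k := by
  rw [gClass, gClass, ← tsum_neg, ← (Equiv.neg ℤ).tsum_eq (fun s => gTerm q (5 * s + (-1 - k)))]
  refine tsum_congr fun s => ?_
  rw [← gTerm_reflect]
  congr 1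
  simp only [Equiv.neg_apply]
  ring

lemma gClass_zero {q : ℂ} (hq : q ≠ 0) : gClass q 0 = thetaB (q ^ 5) := by
  refine tsum_congr fun s => ?_
  rw [thetaTerm_B (pow_ne_zero 5 hq), gTerm, ← zpow_natCast q 5, ← zpow_mul]
  congr 1
  · exact neg_one_zpow_congr ⟨2 * s, by ring⟩
  · congr 1
    have a := two_mul_tri s
    have b := two_mul_tri (5 * s + 0)
    push_cast
    have : 2 * tri (5 * s + 0) = 2 * (5 * (5 * tri s - 2 * s)) := by linear_combination b - 25 * a
    omega

lemma gClass_one {q : ℂ} (hq : q ≠ 0) : gClass q 1 = -(q * thetaA (q ^ 5)) := by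
  rw [gClass, thetaA, ← tsum_mul_left, ← tsum_neg]
  refine tsum_congr fun s => ?_
  rw [thetaTerm_A (pow_ne_zero 5 hq), gTerm, ← zpow_natCast q 5, ← zpow_mul]
  have h1 : ((-1 : ℂ)) ^ (5 * s + 1) = -(-1) ^ s := by
    rw [neg_one_zpow_congr (b := s + 1) ⟨2 * s, by ring⟩, zpow_add_one₀ (by norm_num)]; ring
  have h2 : tri (5 * s + 1) = 1 + ((5 : ℕ) : ℤ) * (5 * tri s - s) := by
    have a := two_mul_tri s
    have b := two_mul_tri (5 * s + 1)
    push_cast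
    have : 2 * tri (5 * s + 1) = 2 * (1 + 5 * (5 * tri s - s)) := by linear_combination b - 25 * a
    omega
  rw [h1, h2, zpow_add₀ hq, zpow_one]
  ring

/-- The integer points `(m, n)`, parametrised through `2m - n = 5s + 2k`, `m + 2n = 5t + k` with
`0 ≤ k < 5`: multiplication by `2 + i` maps `ℤ[i]` onto a sublattice of index `5`. -/
def latticeEquiv : Fin 5 × (ℤ × ℤ) ≃ ℤ × ℤ where
  toFun x := (2 * x.2.1 + x.2.2 + x.1.1, 2 * x.2.2 - x.2.1)
  invFun y := (⟨((y.1 + 2 * y.2) % 5).toNat, by omega⟩,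
    ((2 * y.1 - y.2 - 2 * ((y.1 + 2 * y.2) % 5)) / 5, (y.1 + 2 * y.2) / 5))
  left_inv := by
    rintro ⟨⟨k, hk⟩, s, t⟩
    ext <;> dsimp only <;> omega
  right_inv := by
    rintro ⟨m, n⟩
    ext <;> dsimp only <;> omega

/-- The product of the two theta series is a sum over the lattice `ℤ²`; splitting it along
`latticeEquiv` produces products of residue-class sums of one and the same series. -/
lemma thetaA_mul_thetaB_eq_sum {q : ℂ} (hq : q ≠ 0) (h1 : ‖q‖ < 1) :
    thetaA q * thetaB q = ∑ k : Fin 5, gClass q (2 * (k : ℕ)) * gClass q (k : ℕ) := by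
  have hterm : ∀ m n : ℤ, thetaTerm (q ^ 5) q⁻¹ m * thetaTerm (q ^ 5) (q ^ 2)⁻¹ n =
      gTerm q (2 * m - n) * gTerm q (m + 2 * n) := by
    intro m n
    rw [thetaTerm_A hq, thetaTerm_B hq, gTerm, gTerm]
    have e1 : ((-1 : ℂ)) ^ m * (-1) ^ n = (-1) ^ (2 * m - n) * (-1) ^ (m + 2 * n) := by
      rw [← zpow_add₀ (by norm_num), ← zpow_add₀ (by norm_num)]
      exact neg_one_zpow_congr ⟨-m, by ring⟩
    have e2 : q ^ (5 * tri m - m) * q ^ (5 * tri n - 2 * n) =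
        q ^ tri (2 * m - n) * q ^ tri (m + 2 * n) := by
      rw [← zpow_add₀ hq, ← zpow_add₀ hq]
      congr 1
      have a := two_mul_tri m
      have b := two_mul_tri n
      have c := two_mul_tri (2 * m - n)
      have d := two_mul_tri (m + 2 * n)
      have : 2 * (5 * tri m - m + (5 * tri n - 2 * n)) =
          2 * (tri (2 * m - n) + tri (m + 2 * n)) := by
        linear_combination 5 * a + 5 * b - c - d
      omega
    linear_combination (q ^ (5 * tri m - m) * q ^ (5 * tri n - 2 * n)) * e1 +
      (-1) ^ (2 * m - n) * (-1) ^ (m + 2 * n) * e2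
  have hA := summable_A hq h1
  have hB := summable_B hq h1
  have hg := summable_gTerm hq h1
  have hsub : ∀ k : ℤ, Summable fun s : ℤ => ‖gTerm q (5 * s + k)‖ := fun k =>
    hg.comp_injective (i := fun s : ℤ => 5 * s + k) fun a b h => by simpa using h
  have hS := summable_mul_of_summable_norm hA hB
  rw [thetaA, thetaB, tsum_mul_tsum_of_summable_norm hA hB, ← latticeEquiv.tsum_eq]
  refine (Summable.tsum_prod ((latticeEquiv.summable_iff).2 hS)).trans ?_
  rw [tsum_fintype]
  refine Finset.sum_congr rfl fun k _ => ?_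
  rw [gClass, gClass, tsum_mul_tsum_of_summable_norm (hsub _) (hsub _)]
  refine tsum_congr fun x => ?_
  rw [Function.comp_apply, hterm]
  simp only [latticeEquiv, Equiv.coe_fn_mk]
  congr 2 <;> ring

/-- Two of the five residue classes vanish by oddness and the remaining ones are theta series
again. -/
lemma thetaA_mul_thetaB_eq {q : ℂ} (hq : q ≠ 0) (h1 : ‖q‖ < 1) :
    thetaA q * thetaB q = thetaB (q ^ 5) ^ 2 - q * thetaA (q ^ 5) * thetaB (q ^ 5)
      - q ^ 2 * thetaA (q ^ 5) ^ 2 := by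
  have g2 : gClass q 2 = 0 := by
    have a := gClass_reflect q 2
    have b := gClass_add_five q (-1 - 2)
    norm_num at a b
    rw [← b] at a
    linear_combination a / 2
  have g3 : gClass q 3 = -gClass q 1 := by
    rw [← gClass_reflect, ← gClass_add_five q (-1 - 1)]; norm_num
  have g4 : gClass q 4 = -gClass q 0 := by
    rw [← gClass_reflect, ← gClass_add_five q (-1 - 0)]; norm_num
  have g6 : gClass q 6 = gClass q 1 := gClass_add_five q 1
  have g8 : gClass q 8 = gClass q 3 := gClass_add_five q 3
  rw [thetaA_mul_thetaB_eq_sum hq h1, Fin.sum_univ_five]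
  norm_num
  rw [g6, g8, g2, g3, g4, gClass_zero hq, gClass_one hq]
  ring

/-! ### Product formulas -/

lemma tendsto_thetaA {q : ℂ} (hq : q ≠ 0) (h1 : ‖q‖ < 1) :
    Tendsto (fun N => poch (q ^ 5) N *
      ∏ j ∈ Finset.range N, ((1 - q ^ (5 * j + 4)) * (1 - q ^ (5 * j + 1)))) atTop
      (𝓝 (thetaA q)) := by
  have h5 : ‖q ^ 5‖ < 1 := by rw [norm_pow]; exact pow_lt_one₀ (norm_nonneg _) h1 (by norm_num)
  refine (jtp (pow_ne_zero 5 hq) h5 (inv_ne_zero hq) (summable_A hq h1)).congr fun N => ?_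
  congr 1
  refine Finset.prod_congr rfl fun j _ => ?_
  rw [inv_inv, ← pow_mul, ← pow_mul, show 5 * (j + 1) = (5 * j + 4) + 1 by ring, pow_succ]
  congr 2
  · field_simp
  · ring

lemma tendsto_thetaB {q : ℂ} (hq : q ≠ 0) (h1 : ‖q‖ < 1) :
    Tendsto (fun N => poch (q ^ 5) N *
      ∏ j ∈ Finset.range N, ((1 - q ^ (5 * j + 3)) * (1 - q ^ (5 * j + 2)))) atTop
      (𝓝 (thetaB q)) := by
  have h5 : ‖q ^ 5‖ < 1 := by rw [norm_pow]; exact pow_lt_one₀ (norm_nonneg _) h1 (by norm_num)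
  refine (jtp (pow_ne_zero 5 hq) h5 (inv_ne_zero (pow_ne_zero 2 hq)) (summable_B hq h1)).congr
    fun N => ?_
  congr 1
  refine Finset.prod_congr rfl fun j _ => ?_
  rw [inv_inv, ← pow_mul, ← pow_mul, show 5 * (j + 1) = (5 * j + 3) + 2 by ring, pow_add]
  congr 2
  · field_simp
  · ring

lemma tendsto_five_mul : Tendsto (fun N : ℕ => 5 * N) atTop atTop :=
  tendsto_atTop_mono (fun N => Nat.le_mul_of_pos_left N (by norm_num)) tendsto_id

lemma norm_pow_lt_one {q : ℂ} (h1 : ‖q‖ < 1) {k : ℕ} (hk : k ≠ 0) : ‖q ^ k‖ < 1 := by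
  rw [norm_pow]; exact pow_lt_one₀ (norm_nonneg _) h1 hk

lemma poch_succ (Q : ℂ) (m : ℕ) : poch Q (m + 1) = poch Q m * (1 - Q ^ (m + 1)) := by
  simp [poch, Finset.prod_range_succ]

lemma poch_five_mul_succ (Q : ℂ) (N : ℕ) : poch Q (5 * (N + 1)) = poch Q (5 * N) *
    ((1 - Q ^ (5 * N + 1)) * (1 - Q ^ (5 * N + 2)) * (1 - Q ^ (5 * N + 3)) *
      (1 - Q ^ (5 * N + 4)) * (1 - Q ^ (5 * N + 5))) := by
  rw [show 5 * (N + 1) = 5 * N + 1 + 1 + 1 + 1 + 1 by ring]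
  simp only [poch_succ]
  ring

lemma thetaA_mul_thetaB {q : ℂ} (hq : q ≠ 0) (h1 : ‖q‖ < 1) :
    thetaA q * thetaB q = euler q * euler (q ^ 5) := by
  have hl := (tendsto_thetaA hq h1).mul (tendsto_thetaB hq h1)
  have hr := ((tendsto_poch h1).comp tendsto_five_mul).mul
    (tendsto_poch (norm_pow_lt_one h1 (by norm_num : 5 ≠ 0)))
  refine tendsto_nhds_unique hl (hr.congr fun N => ?_)
  have h5 : poch (q ^ 5) N = ∏ j ∈ Finset.range N, (1 - q ^ (5 * j + 5)) := by
    refine Finset.prod_congr rfl fun j _ => ?_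
    rw [← pow_mul]; congr 2
  have : poch q (5 * N) = poch (q ^ 5) N *
      (∏ j ∈ Finset.range N, ((1 - q ^ (5 * j + 4)) * (1 - q ^ (5 * j + 1)))) *
      ∏ j ∈ Finset.range N, ((1 - q ^ (5 * j + 3)) * (1 - q ^ (5 * j + 2))) := by
    rw [h5, ← Finset.prod_mul_distrib, ← Finset.prod_mul_distrib]
    induction N with
    | zero => simp [poch]
    | succ N ih =>
      rw [poch_five_mul_succ, ih (by
        refine Finset.prod_congr rfl fun j _ => ?_
        rw [← pow_mul]; congr 2), Finset.prod_range_succ]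
      ring
  simp only [Function.comp_apply]
  rw [this]; ring

lemma thetaA_ne_zero {q : ℂ} (hq : q ≠ 0) (h1 : ‖q‖ < 1) : thetaA q ≠ 0 := by
  refine left_ne_zero_of_mul (b := thetaB q) ?_
  rw [thetaA_mul_thetaB hq h1]
  exact mul_ne_zero (euler_ne_zero h1) (euler_ne_zero (norm_pow_lt_one h1 (by norm_num)))

lemma thetaB_ne_zero {q : ℂ} (hq : q ≠ 0) (h1 : ‖q‖ < 1) : thetaB q ≠ 0 := by
  refine right_ne_zero_of_mul (a := thetaA q) ?_
  rw [thetaA_mul_thetaB hq h1]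
  exact mul_ne_zero (euler_ne_zero h1) (euler_ne_zero (norm_pow_lt_one h1 (by norm_num)))

/-! ### Multiplying over the fifth roots of unity -/

/-- `∏_{k mod 5} (X - ζ^k Y) = X⁵ - Y⁵` for a primitive fifth root of unity `ζ`. -/
lemma prod_fifth_roots {ζ : ℂ} (hζ : 1 + ζ + ζ ^ 2 + ζ ^ 3 + ζ ^ 4 = 0) (X Y : ℂ) :
    ∏ k ∈ Finset.range 5, (X - ζ ^ k * Y) = X ^ 5 - Y ^ 5 := by
  have h5 : ζ ^ 5 = 1 := by linear_combination (ζ - 1) * hζ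
  have e1 : (X - ζ * Y) * (X - ζ ^ 4 * Y) = X ^ 2 - (ζ + ζ ^ 4) * (X * Y) + Y ^ 2 := by
    linear_combination Y ^ 2 * h5
  have e2 : (X - ζ ^ 2 * Y) * (X - ζ ^ 3 * Y) = X ^ 2 - (ζ ^ 2 + ζ ^ 3) * (X * Y) + Y ^ 2 := by
    linear_combination Y ^ 2 * h5
  have e3 : (ζ + ζ ^ 4) * (ζ ^ 2 + ζ ^ 3) = -1 := by
    linear_combination (ζ ^ 2 + ζ) * h5 + hζ
  simp only [Finset.prod_range_succ, Finset.prod_range_zero, one_mul, pow_zero, pow_one]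
  have e4 : (X - Y) * (X - ζ * Y) * (X - ζ ^ 2 * Y) * (X - ζ ^ 3 * Y) * (X - ζ ^ 4 * Y) =
      (X - Y) * ((X - ζ * Y) * (X - ζ ^ 4 * Y)) * ((X - ζ ^ 2 * Y) * (X - ζ ^ 3 * Y)) := by ring
  rw [e4, e1, e2]
  linear_combination (X - Y) * (X * Y) ^ 2 * e3 - (X - Y) * (X * Y) * (X ^ 2 + Y ^ 2) * hζ

/-- `B² - tAB - t²A² = (B - φ t A)(B - ψ t A)` with the golden ratio `φ` and its conjugate `ψ`, and
`φ⁵ + ψ⁵ = 11`, `φ ψ = -1`. -/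
lemma prod_quadratic {ζ : ℂ} (hζ : 1 + ζ + ζ ^ 2 + ζ ^ 3 + ζ ^ 4 = 0) (q A B : ℂ) :
    ∏ k ∈ Finset.range 5, (B ^ 2 - (ζ ^ k * q) * A * B - (ζ ^ k * q) ^ 2 * A ^ 2) =
      B ^ 10 - 11 * q ^ 5 * A ^ 5 * B ^ 5 - q ^ 10 * A ^ 10 := by
  obtain ⟨φ, ψ, hs, hp⟩ : ∃ φ ψ : ℂ, φ + ψ = 1 ∧ φ * ψ = -1 :=
    ⟨(goldenRatio : ℝ), (goldenConj : ℝ), by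
      rw [← Complex.ofReal_add, goldenRatio_add_goldenConj]; simp, by
      rw [← Complex.ofReal_mul, goldenRatio_mul_goldenConj]; simp⟩
  have h : ∀ k ∈ Finset.range 5, B ^ 2 - (ζ ^ k * q) * A * B - (ζ ^ k * q) ^ 2 * A ^ 2 =
      (B - ζ ^ k * (φ * q * A)) * (B - ζ ^ k * (ψ * q * A)) := fun k _ => by
    linear_combination (ζ ^ k * q * A * B) * hs - (ζ ^ k * q) ^ 2 * A ^ 2 * hp
  rw [Finset.prod_congr rfl h, Finset.prod_mul_distrib, prod_fifth_roots hζ, prod_fifth_roots hζ]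
  obtain rfl : ψ = 1 - φ := by linear_combination hs
  have hφ : φ ^ 2 = φ + 1 := by linear_combination -hp
  have hs5 : φ ^ 5 + (1 - φ) ^ 5 = 11 := by
    linear_combination (5 * φ ^ 2 - 5 * φ + 10) * hφ
  have hp5 : φ ^ 5 * (1 - φ) ^ 5 = -1 := by
    rw [← mul_pow, hp]; norm_num
  linear_combination (-(B ^ 5 * (q * A) ^ 5)) * hs5 + (q * A) ^ 10 * hp5

/-- `∏_{k mod 5} (ζ^k q; ζ^k q)_∞ = (q⁵; q⁵)_∞⁶ / (q²⁵; q²⁵)_∞`. -/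
lemma prod_euler {ζ : ℂ} (hζ : 1 + ζ + ζ ^ 2 + ζ ^ 3 + ζ ^ 4 = 0) {q : ℂ} (h1 : ‖q‖ < 1) :
    (∏ k ∈ Finset.range 5, euler (ζ ^ k * q)) * euler ((q ^ 5) ^ 5) = euler (q ^ 5) ^ 6 := by
  have h5 : ζ ^ 5 = 1 := by linear_combination (ζ - 1) * hζ
  have hn : ‖ζ‖ = 1 := Complex.norm_eq_one_of_pow_eq_one h5 (by norm_num)
  have hk : ∀ k : ℕ, ‖ζ ^ k * q‖ < 1 := fun k => by rw [norm_mul, norm_pow, hn]; simpa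
  have hq5 : ‖q ^ 5‖ < 1 := norm_pow_lt_one h1 (by norm_num)
  have hl := (tendsto_finsetProd (Finset.range 5) fun k _ =>
    (tendsto_poch (hk k)).comp tendsto_five_mul).mul
      (tendsto_poch (norm_pow_lt_one hq5 (by norm_num : 5 ≠ 0)))
  have hr := ((tendsto_poch hq5).comp tendsto_five_mul).mul ((tendsto_poch hq5).pow 5)
  refine (tendsto_nhds_unique hl (hr.congr fun N => ?_)).trans (by ring)
  simp only [Function.comp_apply]
  have hroot : ∀ i, (1 + ζ ^ i + (ζ ^ i) ^ 2 + (ζ ^ i) ^ 3 + (ζ ^ i) ^ 4 = 0) → ∀ j,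
      ∏ k ∈ Finset.range 5, (1 - (ζ ^ k * q) ^ (5 * j + i)) = 1 - (q ^ 5) ^ (5 * j + i) := by
    intro i hi j
    have h := prod_fifth_roots hi 1 (q ^ (5 * j + i))
    rw [one_pow, ← pow_mul, mul_comm _ 5, pow_mul] at h
    rw [← h]
    refine Finset.prod_congr rfl fun k _ => ?_
    have : (ζ ^ k) ^ (5 * j + i) = (ζ ^ i) ^ k := by
      rw [pow_add, ← pow_mul, show k * (5 * j) = 5 * (k * j) by ring, pow_mul, h5, one_pow,
        one_mul, ← pow_mul, ← pow_mul, mul_comm]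
    rw [mul_pow, this]
  have r1 := hroot 1 (by simpa using hζ)
  have r2 := hroot 2 (by linear_combination (ζ ^ 3 + ζ) * h5 + hζ)
  have r3 := hroot 3 (by linear_combination (ζ + ζ ^ 4 + ζ ^ 7 + ζ ^ 2) * h5 + hζ)
  have r4 := hroot 4 (by
    linear_combination (ζ ^ 3 + ζ ^ 7 + ζ ^ 2 + ζ ^ 11 + ζ ^ 6 + ζ) * h5 + hζ)
  have r5 : ∀ j, ∏ k ∈ Finset.range 5, (1 - (ζ ^ k * q) ^ (5 * j + 5)) =
      (1 - (q ^ 5) ^ (j + 1)) ^ 5 := by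
    intro j
    rw [← Finset.card_range 5, ← Finset.prod_const, Finset.card_range]
    refine Finset.prod_congr rfl fun k _ => ?_
    rw [show 5 * j + 5 = 5 * (j + 1) by ring, pow_mul, mul_pow, ← pow_mul, mul_comm k, pow_mul, h5,
      one_pow, one_mul]
  induction N with
  | zero => simp [poch]
  | succ N ih =>
    simp only [poch_five_mul_succ, Finset.prod_mul_distrib]
    rw [r1, r2, r3, r4, r5, poch_succ, poch_succ, ← pow_mul (q ^ 5) 5, mul_add]
    linear_combination ((1 - (q ^ 5) ^ (5 * N + 1)) * (1 - (q ^ 5) ^ (5 * N + 2)) *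
      (1 - (q ^ 5) ^ (5 * N + 3)) * (1 - (q ^ 5) ^ (5 * N + 4)) * (1 - (q ^ 5) ^ (5 * N + 5)) *
      (1 - (q ^ 5) ^ (N + 1)) ^ 5) * ih

/-- Ramanujan's identity `1/R⁵ - 11 - R⁵ = (q; q)_∞⁶ / (q (q⁵; q⁵)_∞⁶)`, with `R⁵ = Q A⁵ / B⁵` at
`Q = q⁵` and denominators cleared. -/
lemma ramanujan_identity {q : ℂ} (hq : q ≠ 0) (h1 : ‖q‖ < 1) :
    (thetaB (q ^ 5) ^ 10 - 11 * q ^ 5 * thetaA (q ^ 5) ^ 5 * thetaB (q ^ 5) ^ 5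
      - q ^ 10 * thetaA (q ^ 5) ^ 10) * euler ((q ^ 5) ^ 5) ^ 6 =
    euler (q ^ 5) ^ 6 * (thetaA (q ^ 5) * thetaB (q ^ 5)) ^ 5 := by
  have hprim := Complex.isPrimitiveRoot_exp 5 (by norm_num)
  set ζ := Complex.exp (2 * π * Complex.I / (5 : ℕ))
  have hζ : 1 + ζ + ζ ^ 2 + ζ ^ 3 + ζ ^ 4 = 0 := by
    have := hprim.geom_sum_eq_zero (by norm_num)
    simpa [Finset.sum_range_succ] using this
  have h5 : ζ ^ 5 = 1 := hprim.pow_eq_one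
  have hn : ‖ζ‖ = 1 := Complex.norm_eq_one_of_pow_eq_one h5 (by norm_num)
  have hq5 : ‖q ^ 5‖ < 1 := norm_pow_lt_one h1 (by norm_num)
  have hfac : ∀ k ∈ Finset.range 5, euler (ζ ^ k * q) * euler (q ^ 5) =
      thetaB (q ^ 5) ^ 2 - (ζ ^ k * q) * thetaA (q ^ 5) * thetaB (q ^ 5)
        - (ζ ^ k * q) ^ 2 * thetaA (q ^ 5) ^ 2 := by
    intro k _
    have hk0 : ζ ^ k * q ≠ 0 := mul_ne_zero (pow_ne_zero _ (norm_pos_iff.1 (by rw [hn]; simp))) hq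
    have hk1 : ‖ζ ^ k * q‖ < 1 := by rw [norm_mul, norm_pow, hn]; simpa
    have e : (ζ ^ k * q) ^ 5 = q ^ 5 := by
      rw [mul_pow, ← pow_mul, mul_comm k, pow_mul, h5, one_pow, one_mul]
    have := thetaA_mul_thetaB_eq hk0 hk1
    rw [thetaA_mul_thetaB hk0 hk1, e] at this
    exact this
  have hprod := Finset.prod_congr rfl hfac
  rw [prod_quadratic hζ, Finset.prod_mul_distrib, Finset.prod_const, Finset.card_range] at hprod
  have hAB := thetaA_mul_thetaB (pow_ne_zero 5 hq) hq5
  have hE := prod_euler hζ h1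
  rw [← hprod, hAB]
  linear_combination (euler (q ^ 5) ^ 5 * euler ((q ^ 5) ^ 5) ^ 5) * hE

/-! ### The continued fraction and the quotient of Euler products -/

lemma hasProd_one_sub_pow {q : ℝ} (h0 : 0 < q) (h1 : q < 1) (i : ℕ) (hi : i ≠ 0) :
    ∃ a : ℝ, a ≠ 0 ∧ HasProd (fun n : ℕ => 1 - q ^ (5 * n + i)) a := by
  have hs : Summable fun n : ℕ => ‖-q ^ (5 * n + i)‖ := by
    simp_rw [norm_neg, norm_pow, Real.norm_of_nonneg h0.le, pow_add, pow_mul]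
    exact (summable_geometric_of_lt_one (by positivity)
      (pow_lt_one₀ h0.le h1 (by norm_num))).mul_right _
  have hm := multipliable_one_add_of_summable hs
  have hne := tprod_one_add_ne_zero_of_summable (f := fun n : ℕ => -q ^ (5 * n + i))
    (fun n => by
      rw [← sub_eq_add_neg, sub_ne_zero]
      exact (pow_lt_one₀ h0.le h1 (by omega)).ne') hs
  refine ⟨_, hne, ?_⟩
  simpa only [← sub_eq_add_neg] using hm.hasProd

lemma rrcf_nonneg {q : ℝ} (h0 : 0 < q) (h1 : q < 1) : 0 ≤ rrcf q := by
  have h : ∀ k, 0 ≤ 1 - q ^ k := fun k => sub_nonneg.2 (pow_le_one₀ h0.le h1.le)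
  have := h0.le
  refine mul_nonneg (by positivity) (tprod_nonneg fun n => ?_)
  exact div_nonneg (mul_nonneg (h _) (h _)) (mul_nonneg (h _) (h _))

/-- By the product formulas for the theta series, `R = q^{1/5} f(-q, -q⁴) / f(-q², -q³)`. The fifth
power is free of fractional exponents. -/
lemma rrcf_pow_five {q : ℝ} (h0 : 0 < q) (h1 : q < 1) :
    (((rrcf q) ^ 5 : ℝ) : ℂ) = q * (thetaA q / thetaB q) ^ 5 := by
  obtain ⟨a1, -, ha1⟩ := hasProd_one_sub_pow h0 h1 1 (by norm_num)
  obtain ⟨a2, hn2, ha2⟩ := hasProd_one_sub_pow h0 h1 2 (by norm_num)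
  obtain ⟨a3, hn3, ha3⟩ := hasProd_one_sub_pow h0 h1 3 (by norm_num)
  obtain ⟨a4, -, ha4⟩ := hasProd_one_sub_pow h0 h1 4 (by norm_num)
  have hP := (ha4.mul ha1).div₀ (ha3.mul ha2) (mul_ne_zero hn3 hn2)
  have hR : rrcf q = q ^ ((1 : ℝ) / 5) * ((a4 * a1) / (a3 * a2)) := by
    rw [rrcf, ← hP.tprod_eq]
    rfl
  have hq0 : (q : ℂ) ≠ 0 := by exact_mod_cast h0.ne'
  have hq1 : ‖(q : ℂ)‖ < 1 := by rw [Complex.norm_real, Real.norm_of_nonneg h0.le]; exact h1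
  have hq5 : ‖(q : ℂ) ^ 5‖ < 1 := norm_pow_lt_one hq1 (by norm_num)
  have hlim := (tendsto_thetaA hq0 hq1).div (tendsto_thetaB hq0 hq1) (thetaB_ne_zero hq0 hq1)
  have hlim' : Tendsto (fun N : ℕ => ((∏ n ∈ Finset.range N,
      ((1 - q ^ (5 * n + 4)) * (1 - q ^ (5 * n + 1)) /
        ((1 - q ^ (5 * n + 3)) * (1 - q ^ (5 * n + 2)))) : ℝ) : ℂ)) atTop
      (𝓝 (((a4 * a1) / (a3 * a2) : ℝ) : ℂ)) :=
    (Complex.continuous_ofReal.tendsto _).comp hP.tendsto_prod_nat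
  have heq : (((a4 * a1) / (a3 * a2) : ℝ) : ℂ) = thetaA q / thetaB q := by
    refine tendsto_nhds_unique hlim' (hlim.congr fun N => ?_)
    simp only [Pi.div_apply]
    rw [mul_div_mul_left _ _ (poch_ne_zero hq5 N), Finset.prod_div_distrib]
    push_cast
    rfl
  have hroot : (q ^ ((1 : ℝ) / 5)) ^ 5 = q := by
    rw [← Real.rpow_natCast, ← Real.rpow_mul h0.le]; norm_num
  rw [hR, mul_pow, hroot, Complex.ofReal_mul, Complex.ofReal_pow, heq]

/-- The quotient `(q; q)_∞⁶ / (q (q⁵; q⁵)_∞⁶)`, that is, `(η(τ) / η(5τ))⁶`. -/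
noncomputable def hQuot (q : ℂ) : ℂ := euler q ^ 6 / (q * euler (q ^ 5) ^ 6)

lemma euler_ofReal {q : ℝ} (h0 : 0 < q) (h1 : q < 1) : ∃ r : ℝ, r ≠ 0 ∧ euler q = r := by
  have hq1 : ‖(q : ℂ)‖ < 1 := by rw [Complex.norm_real, Real.norm_of_nonneg h0.le]; exact h1
  have hs : Summable fun n : ℕ => ‖-q ^ (n + 1)‖ := by
    simpa using (summable_nat_add_iff 1).mpr
      (summable_geometric_of_lt_one (abs_nonneg q) (by rwa [abs_of_pos h0]))
  have hm := (multipliable_one_add_of_summable hs).hasProd.map Complex.ofRealHom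
    Complex.continuous_ofReal
  have he : euler q = ((∏' n : ℕ, (1 + -q ^ (n + 1)) : ℝ) : ℂ) := by
    have h := hm.tprod_eq
    simp only [Function.comp_def, Complex.ofRealHom_eq_coe] at h
    rw [euler, ← h]
    refine tprod_congr fun n => ?_
    push_cast
    ring
  refine ⟨_, fun h => euler_ne_zero hq1 ?_, he⟩
  rw [he, h, Complex.ofReal_zero]

lemma hQuot_ofReal {q : ℝ} (h0 : 0 < q) (h1 : q < 1) : ∃ r : ℝ, 0 < r ∧ hQuot q = r := by
  obtain ⟨r, hr, h⟩ := euler_ofReal h0 h1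
  obtain ⟨s, hs, h'⟩ := euler_ofReal (pow_pos h0 5) (pow_lt_one₀ h0.le h1 (by norm_num))
  refine ⟨r ^ 6 / (q * s ^ 6), ?_, ?_⟩
  · have a : 0 < r ^ 6 := by positivity
    have b : 0 < s ^ 6 := by positivity
    positivity
  · push_cast at h' ⊢
    rw [hQuot, h, h']

/-- Ramanujan's identity `1/R⁵ - 11 - R⁵ = (q; q)_∞⁶ / (q (q⁵; q⁵)_∞⁶)` on the interval `(0, 1)`, with
the denominator `R⁵` cleared. -/
lemma rrcf_relation {q : ℝ} (h0 : 0 < q) (h1 : q < 1) :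
    0 < rrcf q ^ 5 ∧ (((1 - 11 * rrcf q ^ 5 - (rrcf q ^ 5) ^ 2 : ℝ)) : ℂ) =
      ((rrcf q ^ 5 : ℝ) : ℂ) * hQuot q := by
  have hR := rrcf_pow_five h0 h1
  set x := rrcf q ^ 5 with hx
  have hq0 : (q : ℂ) ≠ 0 := by exact_mod_cast h0.ne'
  have hq1 : ‖(q : ℂ)‖ < 1 := by rw [Complex.norm_real, Real.norm_of_nonneg h0.le]; exact h1
  have hA := thetaA_ne_zero hq0 hq1
  have hB := thetaB_ne_zero hq0 hq1
  have hx0 : (x : ℂ) ≠ 0 := by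
    rw [hR]; exact mul_ne_zero hq0 (pow_ne_zero _ (div_ne_zero hA hB))
  have hE5 := euler_ne_zero (norm_pow_lt_one hq1 (by norm_num : 5 ≠ 0))
  refine ⟨lt_of_le_of_ne (pow_nonneg (rrcf_nonneg h0 h1) 5) fun h => hx0 ?_, ?_⟩
  · exact_mod_cast h.symm
  -- Ramanujan's identity is applied to the fifth root of `q`.
  have hroot : (q ^ ((1 : ℝ) / 5)) ^ 5 = q := by
    rw [← Real.rpow_natCast, ← Real.rpow_mul h0.le]; norm_num
  have hp0 : 0 < q ^ ((1 : ℝ) / 5) := Real.rpow_pos_of_pos h0 _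
  have hp1 : q ^ ((1 : ℝ) / 5) < 1 := Real.rpow_lt_one h0.le h1 (by norm_num)
  generalize q ^ ((1 : ℝ) / 5) = p at hroot hp0 hp1
  have hrc : (p : ℂ) ^ 5 = q := by rw [← hroot]; push_cast; rfl
  have hram := ramanujan_identity (q := (p : ℂ)) (by exact_mod_cast hp0.ne')
    (by rw [Complex.norm_real, Real.norm_of_nonneg hp0.le]; exact hp1)
  have h10 : (p : ℂ) ^ 10 = (q : ℂ) ^ 2 := by rw [← hrc]; ring
  rw [h10, hrc] at hram
  push_cast
  rw [hR, hQuot]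
  field_simp
  linear_combination hram

/-! ### The inversion `τ ↦ -1/(5τ)` -/

lemma eta_mul_I (y : ℝ) :
    ModularForm.eta (y * Complex.I) =
      Complex.exp (-(2 * π * y) / 24) * euler (Complex.exp (-(2 * π * y))) := by
  have e : 2 * (π : ℂ) * Complex.I * (y * Complex.I) = -(2 * π * y) := by
    linear_combination (2 * (π : ℂ) * y) * Complex.I_mul_I
  simp only [ModularForm.eta, ModularForm.eta_q_eq_pow, euler, Function.Periodic.qParam, e]
  congr 3

lemma hQuot_eq_eta (y : ℝ) :
    hQuot (Complex.exp (-(2 * π * y))) =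
      (ModularForm.eta (y * Complex.I) / ModularForm.eta (((5 * y : ℝ) : ℂ) * Complex.I)) ^ 6 := by
  have h5 : Complex.exp (-(2 * π * y)) ^ 5 = Complex.exp (-(2 * π * ((5 * y : ℝ) : ℂ))) := by
    rw [← Complex.exp_nat_mul]; congr 1; push_cast; ring
  rw [eta_mul_I, eta_mul_I, hQuot, h5]
  have e1 : Complex.exp (-(2 * π * y)) * Complex.exp (-(2 * π * y) / 24) ^ 6 =
      Complex.exp (-(2 * π * ((5 * y : ℝ) : ℂ)) / 24) ^ 6 := by
    rw [← Complex.exp_nat_mul, ← Complex.exp_nat_mul, ← Complex.exp_add]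
    congr 1; push_cast; ring
  rw [div_pow, mul_pow, mul_pow, ← e1]
  have b := Complex.exp_ne_zero (-(2 * π * y) / 24)
  generalize Complex.exp (-(2 * π * y)) = Q at *
  generalize Complex.exp (-(2 * π * y) / 24) = P at *
  rw [mul_comm Q (P ^ 6), mul_assoc (P ^ 6), mul_div_mul_left _ _ (pow_ne_zero 6 b)]

lemma eta_inv {y : ℝ} (hy : 0 < y) : ModularForm.eta (((y⁻¹ : ℝ) : ℂ) * Complex.I) =
    (Complex.sqrt Complex.I)⁻¹ * (Complex.sqrt (y * Complex.I) *
      ModularForm.eta (y * Complex.I)) := by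
  have h := ModularForm.eta_comp_eq_csqrt_I_inv (x := (y : ℂ) * Complex.I)
    (by simpa [UpperHalfPlane.upperHalfPlaneSet] using hy)
  have e : -1 / ((y : ℂ) * Complex.I) = ((y⁻¹ : ℝ) : ℂ) * Complex.I := by
    have : (y : ℂ) ≠ 0 := by exact_mod_cast hy.ne'
    push_cast
    field_simp
    simp
  simpa [e] using h

lemma eta_mul_I_ne_zero {y : ℝ} (hy : 0 < y) : ModularForm.eta (y * Complex.I) ≠ 0 :=
  ModularForm.eta_ne_zero (by simpa [UpperHalfPlane.upperHalfPlaneSet] using hy)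

/-- The inversion `η(-1/τ) = √(τ/i) η(τ)`, used at `τ = ib` and `τ = ib/5`, exchanges numerator and
denominator of the eta quotient; the square roots contribute `√5⁶ = 125`. -/
lemma hQuot_mul_hQuot {b : ℝ} (hb : 0 < b) :
    hQuot (Complex.exp (-(2 * π * ((b / 5 : ℝ) : ℂ)))) *
      hQuot (Complex.exp (-(2 * π * ((b⁻¹ : ℝ) : ℂ)))) = 125 := by
  have hb5 : 0 < b / 5 := by positivity
  rw [hQuot_eq_eta, hQuot_eq_eta, show 5 * (b / 5) = b by ring,
    show 5 * b⁻¹ = (b / 5)⁻¹ by field_simp, eta_inv hb, eta_inv hb5]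
  have a := eta_mul_I_ne_zero hb
  have c := eta_mul_I_ne_zero hb5
  have hsq : ∀ z : ℂ, Complex.sqrt z ^ 2 = z := fun z => by
    simp [Complex.sqrt]
  have s0 : Complex.sqrt Complex.I ≠ 0 := by
    intro h; have := hsq Complex.I; rw [h] at this
    exact Complex.I_ne_zero (by simpa using this.symm)
  have s1 := hsq (b * Complex.I)
  have s2 := hsq (((b / 5 : ℝ) : ℂ) * Complex.I)
  have s20 : Complex.sqrt (((b / 5 : ℝ) : ℂ) * Complex.I) ≠ 0 := by
    intro h; rw [h] at s2; simp [hb.ne'] at s2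
  have hr : (Complex.sqrt (b * Complex.I)) ^ 2 =
      5 * Complex.sqrt (((b / 5 : ℝ) : ℂ) * Complex.I) ^ 2 := by
    rw [s1, s2]; push_cast; ring
  generalize Complex.sqrt (b * Complex.I) = u at *
  generalize Complex.sqrt (((b / 5 : ℝ) : ℂ) * Complex.I) = v at *
  have h6 : u ^ 6 = 125 * v ^ 6 := by
    calc u ^ 6 = (u ^ 2) ^ 3 := by ring
      _ = 125 * v ^ 6 := by rw [hr]; ring
  generalize ModularForm.eta (b * Complex.I) = e at *
  generalize ModularForm.eta (((b / 5 : ℝ) : ℂ) * Complex.I) = f at *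
  field_simp
  linear_combination h6

/-! ### The Möbius relation -/

/-- For `k = (-α)⁵`, which satisfies `1/k - k = 11`, the relation
`(1 - 11x - x²)(1 - 11y - y²) = 125xy` factors as the claimed Möbius relation times
`x + y + (1 - xy)/k`. -/
lemma mobius_of_product {x y : ℝ} (hx : 0 < x) (hy : 0 < y) (hx1 : x < 1) (hy1 : y < 1)
    (h : (1 - 11 * x - x ^ 2) * (1 - 11 * y - y ^ 2) = 125 * (x * y)) :
    y = (-alphaRR) ^ 5 * ((1 - betaRR ^ 5 * x) / (1 - alphaRR ^ 5 * x)) := by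
  have h5 : Real.sqrt 5 ^ 2 = 5 := Real.sq_sqrt (by norm_num)
  have hs0 : 2.2 < Real.sqrt 5 := Real.lt_sqrt_of_sq_lt (by norm_num)
  have ha : alphaRR ^ 5 = (11 - 5 * Real.sqrt 5) / 2 := by
    rw [alphaRR]; generalize Real.sqrt 5 = s at *
    linear_combination (-(s ^ 3) / 32 + 5 * s ^ 2 / 32 - 15 * s / 32 + 35 / 32) * h5
  have hb : betaRR ^ 5 = (11 + 5 * Real.sqrt 5) / 2 := by
    rw [betaRR]; generalize Real.sqrt 5 = s at *
    linear_combination (s ^ 3 / 32 + 5 * s ^ 2 / 32 + 15 * s / 32 + 35 / 32) * h5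
  have hna : (-alphaRR) ^ 5 = -alphaRR ^ 5 := by ring
  rw [hna, ha, hb]
  generalize Real.sqrt 5 = s at *
  have hk : 0 < (5 * s - 11) / 2 := by linarith
  have hden : 0 < 1 - (11 - 5 * s) / 2 * x := by nlinarith
  have hxy : x * y < 1 := by nlinarith
  have h2 : 0 < x + y + (11 + 5 * s) / 2 * (1 - x * y) := by
    have : 0 < (11 + 5 * s) / 2 * (1 - x * y) := mul_pos (by linarith) (by linarith)
    linarith
  have hfac : (x + y + (5 * s - 11) / 2 * (x * y) - (5 * s - 11) / 2) *
      (x + y + (11 + 5 * s) / 2 * (1 - x * y)) = 0 := by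
    linear_combination (-1 : ℝ) * h - 25 / 4 * (1 - x * y) ^ 2 * h5
  have h1 := (mul_eq_zero.1 hfac).resolve_right h2.ne'
  rw [← mul_div_assoc, eq_div_iff hden.ne']
  linear_combination h1 + 25 / 4 * x * h5

theorem rrcf_fifth_modular_relation (b : ℝ) (hb : 0 < b) :
    (rrcf (Real.exp (-2 * Real.pi / b)))^5 =
      (-alphaRR)^5 *
        ((1 - betaRR^5 * (rrcf (Real.exp (-2 * Real.pi * b / 5)))^5) /
          (1 - alphaRR^5 * (rrcf (Real.exp (-2 * Real.pi * b / 5)))^5)) := by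
  have hu1 : Real.exp (-2 * π * b / 5) < 1 := by
    rw [Real.exp_lt_one_iff]
    have : 0 < π * b := by positivity
    linarith
  have hv1 : Real.exp (-2 * π / b) < 1 := by
    rw [Real.exp_lt_one_iff]
    exact div_neg_of_neg_of_pos (by linarith [Real.pi_pos]) hb
  have hcu : ((Real.exp (-2 * π * b / 5) : ℝ) : ℂ) =
      Complex.exp (-(2 * π * ((b / 5 : ℝ) : ℂ))) := by
    push_cast; congr 1; ring
  have hcv : ((Real.exp (-2 * π / b) : ℝ) : ℂ) = Complex.exp (-(2 * π * ((b⁻¹ : ℝ) : ℂ))) := by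
    push_cast; congr 1; ring
  have hprod := hQuot_mul_hQuot hb
  rw [← hcu, ← hcv] at hprod
  obtain ⟨hx, hxr⟩ := rrcf_relation (Real.exp_pos _) hu1
  obtain ⟨hy, hyr⟩ := rrcf_relation (Real.exp_pos _) hv1
  obtain ⟨r, hr, hr'⟩ := hQuot_ofReal (Real.exp_pos _) hu1
  obtain ⟨s, hs, hs'⟩ := hQuot_ofReal (Real.exp_pos _) hv1
  rw [hr', hs'] at hprod
  rw [hr'] at hxr
  rw [hs'] at hyr
  have hprod' : r * s = 125 := by exact_mod_cast hprod
  have hxr' := Complex.ofReal_injective (hxr.trans (Complex.ofReal_mul _ _).symm)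
  have hyr' := Complex.ofReal_injective (hyr.trans (Complex.ofReal_mul _ _).symm)
  generalize rrcf (Real.exp (-2 * π * b / 5)) ^ 5 = x at *
  generalize rrcf (Real.exp (-2 * π / b)) ^ 5 = y at *
  -- Since `1 - 11x - x² = xr > 0`, the fifth powers `x` and `y` lie below `1`.
  have hxp : 0 < x * r := mul_pos hx hr
  have hyp : 0 < y * s := mul_pos hy hs
  refine mobius_of_product hx hy (by nlinarith) (by nlinarith) ?_
  rw [hxr', hyr']
  linear_combination (x * y) * hprod'
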